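/- Let n ≥ 1 and let A, B be real symmetric n×n matrices with eigenvalues λ_1(A) ≥ … ≥ λ_n(A) and λ_1(B) ≥ … ≥ λ_n(B) listed in decreasing order with multiplicity. Let f : ℝ → ℝ be L-Lipschitz. Then | (1/n)∑_{i=1}^n f(λ_i(A)) − (1/n)∑_{i=1}^n f(λ_i(B)) | ≤ L · ( (1/n) ∑_{i,k=1}^n (A_{ik} − B_{ik})² )^{1/2}. -/

import Mathlib

open Matrix

/-!
Write `A = U D U*` and `B = V E V*` with real diagonal `D`, `E`, and put `W = U* V`. Then
`A - B = U (D W - W E) V*`, so unitary invariance of the Frobenius norm gives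
`‖A - B‖² = ∑ i j, |W i j|² (λᵢ(A) - λⱼ(B))²`. The weights `|W i j|²` are doubly stochastic:
divided by `n`, they couple the two empirical spectral measures at quadratic cost `‖A - B‖² / n`.
The averages of an `L`-Lipschitz function over the two marginals differ by at most `L` times the
mean distance under the coupling, which Cauchy–Schwarz bounds by the root mean square distance.
-/

section Coupling

variable {ι κ X E : Type*} [Fintype ι] [Fintype κ] [PseudoMetricSpace X]
  [SeminormedAddCommGroup E] [NormedSpace ℝ E]

lemma sum_mul_le_sqrt_sum_mul_sum_mul_sq {w : ι → ℝ} (hw : ∀ i, 0 ≤ w i) (d : ι → ℝ) :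
    ∑ i, w i * d i ≤ √((∑ i, w i) * ∑ i, w i * d i ^ 2) :=
  Real.le_sqrt_of_sq_le <| Finset.sum_sq_le_sum_mul_sum_of_sq_le_mul _ (fun i _ ↦ hw i)
    (fun i _ ↦ mul_nonneg (hw i) (sq_nonneg _)) fun i _ ↦ (by ring : _ = _).le

lemma norm_sum_smul_sub_sum_smul_le_of_coupling {p : ι → κ → ℝ} {μ : ι → ℝ} {ν : κ → ℝ}
    (hp : ∀ i j, 0 ≤ p i j) (hμ : ∀ i, ∑ j, p i j = μ i) (hν : ∀ j, ∑ i, p i j = ν j)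
    {f : X → E} {K : NNReal} (hf : LipschitzWith K f) (a : ι → X) (b : κ → X) :
    ‖∑ i, μ i • f (a i) - ∑ j, ν j • f (b j)‖
      ≤ K * ∑ i, ∑ j, p i j * dist (a i) (b j) := by
  have hdiff : ∑ i, μ i • f (a i) - ∑ j, ν j • f (b j)
      = ∑ i, ∑ j, p i j • (f (a i) - f (b j)) := by
    simp only [smul_sub, Finset.sum_sub_distrib]
    rw [Finset.sum_comm (f := fun i j ↦ p i j • f (b j))]
    simp only [← Finset.sum_smul, hμ, hν]
  have hterm (i : ι) (j : κ) :
      ‖p i j • (f (a i) - f (b j))‖ ≤ K * (p i j * dist (a i) (b j)) := by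
    rw [norm_smul, Real.norm_of_nonneg (hp i j), ← dist_eq_norm, mul_left_comm]
    exact mul_le_mul_of_nonneg_left (hf.dist_le_mul _ _) (hp i j)
  simp only [hdiff, Finset.mul_sum]
  exact norm_sum_le_of_le _ fun i _ ↦ norm_sum_le_of_le _ fun j _ ↦ hterm i j

lemma norm_average_sub_average_le_of_mem_doublyStochastic [DecidableEq ι] [Nonempty ι]
    {P : Matrix ι ι ℝ} (hP : P ∈ doublyStochastic ℝ ι)
    {f : X → E} {K : NNReal} (hf : LipschitzWith K f) (a b : ι → X) :
    ‖(Fintype.card ι : ℝ)⁻¹ • ∑ i, f (a i) - (Fintype.card ι : ℝ)⁻¹ • ∑ i, f (b i)‖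
      ≤ K * √((Fintype.card ι : ℝ)⁻¹ * ∑ i, ∑ j, P i j * dist (a i) (b j) ^ 2) := by
  set c : ℝ := (Fintype.card ι : ℝ)⁻¹ with hc
  have hnonneg (i j : ι) : 0 ≤ c * P i j :=
    mul_nonneg (by positivity) (nonneg_of_mem_doublyStochastic hP)
  have hrow (i : ι) : ∑ j, c * P i j = c := by
    rw [← Finset.mul_sum, sum_row_of_mem_doublyStochastic hP, mul_one]
  have hcol (j : ι) : ∑ i, c * P i j = c := by
    rw [← Finset.mul_sum, sum_col_of_mem_doublyStochastic hP, mul_one]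
  have hmass : ∑ x : ι × ι, c * P x.1 x.2 = 1 := by
    simp only [Fintype.sum_prod_type, hrow]
    simp [hc]
  calc ‖c • ∑ i, f (a i) - c • ∑ i, f (b i)‖
      ≤ K * ∑ i, ∑ j, c * P i j * dist (a i) (b j) := by
        simpa only [Finset.smul_sum] using
          norm_sum_smul_sub_sum_smul_le_of_coupling hnonneg hrow hcol hf a b
    _ ≤ K * √(∑ i, ∑ j, c * P i j * dist (a i) (b j) ^ 2) := by
        gcongr
        simpa only [hmass, one_mul, Fintype.sum_prod_type] using
          sum_mul_le_sqrt_sum_mul_sum_mul_sq (fun x : ι × ι ↦ hnonneg x.1 x.2)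
            fun x ↦ dist (a x.1) (b x.2)
    _ = K * √(c * ∑ i, ∑ j, P i j * dist (a i) (b j) ^ 2) := by
        simp only [Finset.mul_sum, mul_assoc]

end Coupling

section Frobenius

open scoped Matrix.Norms.Frobenius

variable {𝕜 m n : Type*} [RCLike 𝕜] [Fintype m] [Fintype n]

lemma frobenius_norm_sq_eq_sum {α : Type*} [SeminormedAddCommGroup α] (M : Matrix m n α) :
    ‖M‖ ^ 2 = ∑ i, ∑ j, ‖M i j‖ ^ 2 := by
  rw [frobenius_norm_def, ← Real.sqrt_eq_rpow, Real.sq_sqrt (by positivity)]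
  simp only [Real.rpow_two]

lemma ofReal_frobenius_norm_sq_eq_trace (M : Matrix m n 𝕜) :
    ((‖M‖ ^ 2 : ℝ) : 𝕜) = (Mᴴ * M).trace := by
  rw [frobenius_norm_sq_eq_sum, Finset.sum_comm]
  simp [Matrix.trace, Matrix.mul_apply, RCLike.conj_mul]

lemma frobenius_norm_unitary_mul [DecidableEq m] (U : unitaryGroup m 𝕜) (M : Matrix m n 𝕜) :
    ‖(U : Matrix m m 𝕜) * M‖ = ‖M‖ := by
  have hU : (U : Matrix m m 𝕜)ᴴ * U = 1 := Unitary.coe_star_mul_self U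
  have hsq : ‖(U : Matrix m m 𝕜) * M‖ ^ 2 = ‖M‖ ^ 2 := by
    apply RCLike.ofReal_injective (K := 𝕜)
    rw [ofReal_frobenius_norm_sq_eq_trace, ofReal_frobenius_norm_sq_eq_trace,
      conjTranspose_mul, Matrix.mul_assoc, ← Matrix.mul_assoc _ _ M, hU, Matrix.one_mul]
  exact (sq_eq_sq₀ (norm_nonneg _) (norm_nonneg _)).1 hsq

lemma frobenius_norm_mul_unitary [DecidableEq n] (M : Matrix m n 𝕜) (U : unitaryGroup n 𝕜) :
    ‖M * (U : Matrix n n 𝕜)‖ = ‖M‖ := by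
  rw [← frobenius_norm_conjTranspose, conjTranspose_mul, ← star_eq_conjTranspose (U : Matrix n n 𝕜),
    ← Unitary.coe_star, frobenius_norm_unitary_mul, frobenius_norm_conjTranspose]

lemma frobenius_norm_diagonal_mul_sub_mul_diagonal_sq [DecidableEq m] [DecidableEq n]
    (a : m → 𝕜) (b : n → 𝕜) (M : Matrix m n 𝕜) :
    ‖(diagonal a * M - M * diagonal b : Matrix m n 𝕜)‖ ^ 2
      = ∑ i, ∑ j, ‖M i j‖ ^ 2 * dist (a i) (b j) ^ 2 := by
  have hentry (i : m) (j : n) :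
      (diagonal a * M - M * diagonal b : Matrix m n 𝕜) i j = M i j * (a i - b j) := by
    rw [Matrix.sub_apply, diagonal_mul, mul_diagonal]
    ring
  simp only [frobenius_norm_sq_eq_sum, hentry, norm_mul, mul_pow, dist_eq_norm]

variable [DecidableEq n]

/-- The unistochastic matrix of a unitary `U`, with entries `|U i j|²`. For `U = U_A* U_B` these are
the squared overlaps of the eigenvectors of `A` with those of `B`. -/
def unistochastic (U : unitaryGroup n 𝕜) : Matrix n n ℝ :=
  of fun i j ↦ ‖(U : Matrix n n 𝕜) i j‖ ^ 2

lemma unistochastic_mem_doublyStochastic (U : unitaryGroup n 𝕜) :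
    unistochastic U ∈ doublyStochastic ℝ n := by
  refine mem_doublyStochastic_iff_sum.2 ⟨fun i j ↦ sq_nonneg _, fun i ↦ ?_, fun j ↦ ?_⟩ <;>
    apply RCLike.ofReal_injective (K := 𝕜)
  · have hrow := congr_fun₂ (Unitary.coe_mul_star_self U) i i
    simpa [unistochastic, Matrix.mul_apply, RCLike.mul_conj] using hrow
  · have hcol := congr_fun₂ (Unitary.coe_star_mul_self U) j j
    simpa [unistochastic, Matrix.mul_apply, RCLike.conj_mul] using hcol

lemma frobenius_norm_sub_sq_eq_sum_unistochastic {A B : Matrix n n 𝕜}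
    (hA : A.IsHermitian) (hB : B.IsHermitian) :
    ‖A - B‖ ^ 2 = ∑ i, ∑ j, unistochastic (star hA.eigenvectorUnitary * hB.eigenvectorUnitary) i j
      * dist (hA.eigenvalues i) (hB.eigenvalues j) ^ 2 := by
  set U := hA.eigenvectorUnitary
  set V := hB.eigenvectorUnitary
  set W : unitaryGroup n 𝕜 := star U * V
  set D : Matrix n n 𝕜 := diagonal (RCLike.ofReal ∘ hA.eigenvalues)
  set E : Matrix n n 𝕜 := diagonal (RCLike.ofReal ∘ hB.eigenvalues)
  have hUA : (star U : Matrix n n 𝕜) * A = D * (star U : Matrix n n 𝕜) := by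
    conv_lhs => rw [hA.spectral_theorem, Unitary.conjStarAlgAut_apply]
    rw [← mul_assoc, ← mul_assoc, Unitary.coe_star_mul_self, one_mul]
  have hBV : B * (V : Matrix n n 𝕜) = V * E := by
    conv_lhs => rw [hB.spectral_theorem, Unitary.conjStarAlgAut_apply]
    rw [mul_assoc, Unitary.coe_star_mul_self, mul_one]
  have hconj : (star U : Matrix n n 𝕜) * (A - B) * V
      = D * (W : Matrix n n 𝕜) - (W : Matrix n n 𝕜) * E := by
    rw [mul_sub, sub_mul, hUA, mul_assoc _ B, hBV]
    simp only [W, Submonoid.coe_mul, Unitary.coe_star, mul_assoc]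
  have hdist (x y : ℝ) : dist (x : 𝕜) y = dist x y := RCLike.ofRealLI.isometry.dist_eq x y
  calc ‖A - B‖ ^ 2
      = ‖(star U : Matrix n n 𝕜) * (A - B) * V‖ ^ 2 := by
        rw [frobenius_norm_mul_unitary, ← Unitary.coe_star, frobenius_norm_unitary_mul]
    _ = ‖D * (W : Matrix n n 𝕜) - (W : Matrix n n 𝕜) * E‖ ^ 2 := by
        rw [hconj]
    _ = ∑ i, ∑ j, unistochastic W i j * dist (hA.eigenvalues i) (hB.eigenvalues j) ^ 2 := by
        rw [frobenius_norm_diagonal_mul_sub_mul_diagonal_sq]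
        simp only [unistochastic, of_apply, Function.comp_apply, hdist]

theorem averaged_lipschitz_eigenvalue_bound_general [Nonempty n]
    {E : Type*} [SeminormedAddCommGroup E] [NormedSpace ℝ E] {A B : Matrix n n 𝕜}
    (hA : A.IsHermitian) (hB : B.IsHermitian) {f : ℝ → E} {K : NNReal} (hf : LipschitzWith K f) :
    ‖(Fintype.card n : ℝ)⁻¹ • ∑ i, f (hA.eigenvalues i)
        - (Fintype.card n : ℝ)⁻¹ • ∑ i, f (hB.eigenvalues i)‖
      ≤ K * √((Fintype.card n : ℝ)⁻¹ * ∑ i, ∑ k, ‖A i k - B i k‖ ^ 2) := by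
  simp only [← Matrix.sub_apply]
  rw [← frobenius_norm_sq_eq_sum, frobenius_norm_sub_sq_eq_sum_unistochastic hA hB]
  exact norm_average_sub_average_le_of_mem_doublyStochastic
    (unistochastic_mem_doublyStochastic _) hf _ _

end Frobenius

/-- **Hoffman–Wielandt corollary.** For real symmetric `n × n` matrices `A`, `B` and an
`L`-Lipschitz function `f : ℝ → ℝ`, the averages of `f` over the eigenvalues (listed with
multiplicity) differ by at most `L · ((1/n) ∑_{i,k} (A_{ik} − B_{ik})²)^{1/2}`. -/
theorem averaged_lipschitz_eigenvalue_bound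
    (n : ℕ) (hn : 1 ≤ n) (A B : Matrix (Fin n) (Fin n) ℝ)
    (hA : A.IsHermitian) (hB : B.IsHermitian)
    (f : ℝ → ℝ) (L : ℝ) (hf : ∀ x y : ℝ, |f x - f y| ≤ L * |x - y|) :
    |(1 / (n : ℝ)) * ∑ i, f (hA.eigenvalues i) - (1 / (n : ℝ)) * ∑ i, f (hB.eigenvalues i)|
      ≤ L * Real.sqrt ((1 / (n : ℝ)) * ∑ i : Fin n, ∑ k : Fin n, (A i k - B i k) ^ 2) := by
  lift L to NNReal using by simpa using (abs_nonneg _).trans (hf 1 0)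
  have : Nonempty (Fin n) := ⟨⟨0, hn⟩⟩
  simpa using averaged_lipschitz_eigenvalue_bound_general hA hB (.of_dist_le_mul (f := f) hf)
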